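/- The thickness of the complete tripartite graph K_{2,13,13} equals 4. -/

import Mathlib

open SimpleGraph

/-- A simple graph is planar if it admits a drawing in the plane: an injective
placement of vertices and, for each edge, an injective continuous arc joining
the images of its endpoints, such that arcs avoid vertex images in their
interiors and distinct arcs meet only at vertex images. -/
def IsPlanar {V : Type*} (G : SimpleGraph V) : Prop :=
  ∃ (f : V → ℝ × ℝ) (γ : G.edgeSet → (Set.Icc (0:ℝ) 1 → ℝ × ℝ)),
    Function.Injective f ∧
    (∀ e : G.edgeSet, Continuous (γ e)) ∧
    (∀ e : G.edgeSet, ∃ u v : V, (e : Sym2 V) = s(u, v) ∧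
      γ e ⟨0, by norm_num⟩ = f u ∧ γ e ⟨1, by norm_num⟩ = f v) ∧
    (∀ e : G.edgeSet, Function.Injective (γ e)) ∧
    (∀ e : G.edgeSet, ∀ t : Set.Icc (0:ℝ) 1, (t : ℝ) ≠ 0 → (t : ℝ) ≠ 1 →
      ∀ v : V, γ e t ≠ f v) ∧
    (∀ e e' : G.edgeSet, e ≠ e' → ∀ s t : Set.Icc (0:ℝ) 1,
      γ e s = γ e' t → γ e s ∈ Set.range f)

/-- The thickness of a graph: the least `n` such that `G` is the union of `n`
planar subgraphs. -/
noncomputable def thickness {V : Type*} (G : SimpleGraph V) : ℕ :=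
  sInf {n : ℕ | ∃ H : Fin n → SimpleGraph V,
    (∀ i, H i ≤ G) ∧ (∀ i, IsPlanar (H i)) ∧ (⨆ i, H i) = G}

def edg0 : List (ℕ × ℕ) := [
  (0, 2), (0, 7), (0, 11), (0, 12), (0, 14), (0, 17), (0, 19), (0, 22), (0, 23), (0, 24), (0,
  25), (0, 27), (1, 3), (1, 10), (1, 12), (1, 15), (1, 21), (2, 16), (2, 22), (2, 27), (3, 16),
  (3, 21), (3, 27), (4, 17), (4, 18), (4, 19), (4, 20), (4, 25), (4, 26), (5, 20), (5, 23), (6,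
  15), (6, 20), (6, 21), (6, 23), (7, 21), (7, 23), (7, 27), (8, 15), (8, 19), (9, 18), (9, 24),
  (10, 15), (10, 21), (11, 19), (11, 26), (12, 15), (12, 16), (12, 19), (12, 22), (13, 18), (13,
  24), (13, 25), (14, 17), (14, 20), (14, 23)]

def pts0 : List (ℤ × ℤ) := [
  (0, 0), (25, 37), (10, 13), (21, 28), (45, 23), (33, 30), (34, 39), (17, 14), (31, 49), (31,
  10), (29, 37), (60, 0), (23, 42), (36, 8), (33, 20), (27, 47), (19, 29), (23, 11), (38, 16),
  (30, 60), (39, 33), (26, 25), (13, 22), (25, 19), (19, 5), (38, 3), (48, 9), (15, 17)]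

def edg1 : List (ℕ × ℕ) := [
  (0, 5), (0, 6), (0, 10), (0, 18), (0, 26), (1, 6), (1, 9), (1, 11), (1, 14), (1, 17), (1, 19),
  (1, 27), (2, 20), (2, 26), (3, 19), (3, 20), (3, 26), (4, 22), (4, 27), (5, 22), (5, 26), (6,
  19), (6, 26), (7, 15), (7, 16), (7, 19), (7, 20), (7, 26), (8, 17), (8, 18), (8, 21), (8, 24),
  (9, 17), (9, 27), (10, 17), (10, 18), (10, 22), (10, 24), (10, 27), (11, 17), (11, 18), (11,
  21), (11, 23), (11, 25), (12, 17), (12, 21), (12, 23), (12, 25), (13, 22), (13, 26), (14, 15),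
  (14, 16), (14, 19), (14, 22), (14, 26), (14, 27)]

def pts1 : List (ℤ × ℤ) := [
  (71, 29), (0, 0), (37, 32), (30, 25), (65, 62), (59, 42), (34, 16), (34, 37), (70, 15), (100,
  0), (86, 21), (22, 4), (65, 10), (49, 56), (40, 72), (31, 46), (41, 48), (80, 3), (51, 17),
  (15, 16), (28, 28), (48, 11), (58, 66), (63, 4), (79, 13), (50, 6), (48, 31), (50, 100)]

def edg2 : List (ℕ × ℕ) := [
  (0, 3), (0, 8), (0, 9), (0, 15), (0, 20), (1, 2), (1, 23), (2, 15), (2, 19), (2, 23), (3, 15),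
  (3, 17), (3, 18), (3, 22), (3, 24), (3, 25), (4, 15), (4, 23), (5, 15), (5, 16), (5, 17), (5,
  19), (5, 21), (5, 25), (5, 27), (6, 17), (6, 18), (6, 22), (6, 24), (6, 25), (7, 22), (7, 24),
  (8, 20), (8, 25), (9, 15), (9, 20), (9, 21), (9, 25), (9, 26), (10, 20), (10, 25), (10, 26),
  (11, 22), (11, 24), (12, 18), (12, 24), (13, 15), (13, 16), (13, 17), (13, 19), (13, 23), (13,
  27), (14, 21), (14, 25)]

def pts2 : List (ℤ × ℤ) := [
  (0, 0), (28, 6), (29, 10), (60, 0), (35, 4), (29, 26), (33, 32), (51, 11), (30, 60), (8, 8),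
  (22, 35), (42, 21), (39, 29), (49, 4), (24, 29), (18, 2), (32, 14), (42, 15), (39, 36), (27,
  13), (22, 40), (18, 12), (44, 15), (36, 6), (47, 20), (34, 48), (21, 30), (36, 14)]

def edg3 : List (ℕ × ℕ) := [
  (0, 4), (0, 13), (0, 16), (0, 21), (1, 4), (1, 5), (1, 7), (1, 8), (1, 13), (1, 16), (1, 18),
  (1, 20), (1, 22), (1, 24), (1, 25), (1, 26), (2, 17), (2, 18), (2, 21), (2, 24), (2, 25), (3,
  23), (4, 16), (4, 21), (4, 24), (5, 18), (5, 24), (6, 16), (6, 27), (7, 17), (7, 18), (7, 25),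
  (8, 16), (8, 22), (8, 23), (8, 26), (8, 27), (9, 16), (9, 19), (9, 22), (9, 23), (10, 16),
  (10, 19), (10, 23), (11, 15), (11, 16), (11, 20), (11, 27), (12, 20), (12, 26), (12, 27), (13,
  20), (13, 21), (14, 18), (14, 24)]

def pts3 : List (ℤ × ℤ) := [
  (0, 0), (75, 29), (42, 9), (54, 69), (100, 0), (76, 16), (45, 71), (63, 18), (55, 56), (62,
  58), (56, 72), (31, 39), (49, 40), (20, 22), (66, 10), (39, 57), (50, 100), (57, 17), (64,
  15), (56, 77), (39, 29), (28, 7), (68, 45), (60, 54), (84, 5), (65, 22), (61, 36), (47, 57)]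

def ptAt (pts : List (ℤ × ℤ)) (n : ℕ) : ℤ × ℤ := pts.getD n (0, 0)

def orient (a b c : ℤ × ℤ) : ℤ := (b.1 - a.1) * (c.2 - a.2) - (b.2 - a.2) * (c.1 - a.1)

def sepEdges (pts : List (ℤ × ℤ)) (e e' : ℕ × ℕ) : Bool :=
  decide (0 < orient (ptAt pts e.1) (ptAt pts e.2) (ptAt pts e'.1) *
    orient (ptAt pts e.1) (ptAt pts e.2) (ptAt pts e'.2))

def checkDraw (pts : List (ℤ × ℤ)) (L : List (ℕ × ℕ)) : Bool :=
  ((List.range 28).all fun u => (List.range 28).all fun v =>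
    u == v || ptAt pts u != ptAt pts v) &&
  (L.all fun e => decide (e.1 < e.2) && (List.range 28).all fun v =>
    v == e.1 || v == e.2 || orient (ptAt pts e.1) (ptAt pts e.2) (ptAt pts v) != 0) &&
  (L.all fun e => L.all fun e' =>
    e.1 == e'.1 || e.1 == e'.2 || e.2 == e'.1 || e.2 == e'.2 || sepEdges pts e e'
      || sepEdges pts e' e)

def castPt (a : ℤ × ℤ) : ℝ × ℝ := ((a.1 : ℝ), (a.2 : ℝ))

def seg (A B : ℝ × ℝ) (t : ℝ) : ℝ × ℝ := ((1 - t) * A.1 + t * B.1, (1 - t) * A.2 + t * B.2)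

theorem seg_orient {a b c d : ℤ × ℤ} {s t : ℝ}
    (h : seg (castPt a) (castPt b) s = seg (castPt c) (castPt d) t) :
    (1 - t) * (orient a b c : ℝ) + t * (orient a b d : ℝ) = 0 := by
  simp only [seg, castPt, Prod.mk.injEq] at h
  obtain ⟨h1, h2⟩ := h
  simp only [orient]
  push_cast
  linear_combination ((b.2 : ℝ) - a.2) * h1 - ((b.1 : ℝ) - a.1) * h2

theorem seg_sep {a b c d : ℤ × ℤ} {s t : ℝ} (ht0 : 0 ≤ t) (ht1 : t ≤ 1)
    (hp : 0 < orient a b c * orient a b d) :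
    seg (castPt a) (castPt b) s ≠ seg (castPt c) (castPt d) t := by
  intro h
  have h := seg_orient h
  have hp : (0 : ℝ) < (orient a b c : ℝ) * (orient a b d : ℝ) := by exact_mod_cast hp
  generalize (orient a b c : ℝ) = x at *
  generalize (orient a b d : ℝ) = y at *
  have h1 : (1 - t) * (x * x) + t * (x * y) = 0 := by linear_combination x * h
  have hx : 0 < x * x := by
    rcases eq_or_ne x 0 with rfl | hx
    · simp at hp
    · exact mul_self_pos.2 hx
  rcases eq_or_lt_of_le ht0 with h0 | h0
  · rw [← h0] at h1; linarith
  · have := mul_pos h0 hp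
    have := mul_nonneg (sub_nonneg.2 ht1) hx.le
    linarith

theorem castPt_inj {a b : ℤ × ℤ} (h : castPt a = castPt b) : a = b := by
  simp only [castPt, Prod.mk.injEq, Int.cast_inj] at h
  exact Prod.ext h.1 h.2

theorem planar_of_check {V : Type*} (G : SimpleGraph V) (enc : V → ℕ)
    (henc : Function.Injective enc) (hlt : ∀ v, enc v < 28)
    (pts : List (ℤ × ℤ)) (L : List (ℕ × ℕ)) (hL : checkDraw pts L = true)
    (hG : ∀ u v, G.Adj u v → (enc u, enc v) ∈ L ∨ (enc v, enc u) ∈ L) : IsPlanar G := by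
  simp only [checkDraw, Bool.and_eq_true, List.all_eq_true, List.mem_range, Bool.or_eq_true,
    beq_iff_eq, bne_iff_ne, ne_eq, decide_eq_true_eq] at hL
  obtain ⟨⟨h1, h2⟩, h3⟩ := hL
  have hex : ∀ e : G.edgeSet, ∃ uv : V × V, (e : Sym2 V) = s(uv.1, uv.2) ∧
      (enc uv.1, enc uv.2) ∈ L := by
    rintro ⟨e, he⟩
    induction e using Sym2.ind with
    | _ u v =>
      rcases hG u v he with h | h
      · exact ⟨(u, v), rfl, h⟩
      · exact ⟨(v, u), Sym2.eq_swap, h⟩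
  choose uv huv hmem using hex
  let Q : V → ℤ × ℤ := fun v => ptAt pts (enc v)
  have hQ : ∀ u v, Q u = Q v → u = v := by
    intro u v h
    rcases h1 _ (hlt u) _ (hlt v) with h' | h'
    · exact henc h'
    · exact absurd h h'
  have hor : ∀ e : G.edgeSet, ∀ v, v ≠ (uv e).1 → v ≠ (uv e).2 →
      orient (Q (uv e).1) (Q (uv e).2) (Q v) ≠ 0 := by
    intro e v n1 n2
    rcases (h2 _ (hmem e)).2 _ (hlt v) with (h | h) | h
    · exact absurd (henc h) n1
    · exact absurd (henc h) n2
    · exact h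
  have hne : ∀ e : G.edgeSet, (uv e).1 ≠ (uv e).2 := by
    intro e h
    have := (h2 _ (hmem e)).1
    rw [h] at this
    exact lt_irrefl _ this
  refine ⟨fun v => castPt (Q v), fun e t => seg (castPt (Q (uv e).1)) (castPt (Q (uv e).2)) t,
    ?_, ?_, ?_, ?_, ?_, ?_⟩
  · intro u v h
    exact hQ _ _ (castPt_inj h)
  · intro e
    simp only [seg]
    fun_prop
  · intro e
    refine ⟨(uv e).1, (uv e).2, huv e, ?_, ?_⟩ <;> simp [seg]
  · intro e s t h
    simp only [seg, Prod.mk.injEq] at h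
    by_contra hst
    have hst : (s : ℝ) - t ≠ 0 := fun h => hst (Subtype.ext (by linarith))
    apply hne e
    apply hQ
    apply castPt_inj
    ext
    · exact mul_left_cancel₀ hst (by linear_combination -h.1)
    · exact mul_left_cancel₀ hst (by linear_combination -h.2)
  · intro e t h0 h1' v h
    dsimp only at h
    by_cases n1 : v = (uv e).1
    · subst n1
      apply hne e
      apply hQ
      apply castPt_inj
      simp only [seg, Prod.ext_iff] at h
      ext
      · exact mul_left_cancel₀ h0 (by linear_combination -h.1)
      · exact mul_left_cancel₀ h0 (by linear_combination -h.2)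
    by_cases n2 : v = (uv e).2
    · subst n2
      apply hne e
      apply hQ
      apply castPt_inj
      simp only [seg, Prod.ext_iff] at h
      have h1' : (1 - (t : ℝ)) ≠ 0 := fun h => h1' (by linarith)
      ext
      · exact mul_left_cancel₀ h1' (by linear_combination h.1)
      · exact mul_left_cancel₀ h1' (by linear_combination h.2)
    have h' : seg (castPt (Q (uv e).1)) (castPt (Q (uv e).2)) t
        = seg (castPt (Q v)) (castPt (Q v)) 0 := by
      rw [h]; simp [seg]
    have := seg_orient h'
    simp only [sub_zero, one_mul, zero_mul, add_zero, Int.cast_eq_zero] at this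
    exact hor e v n1 n2 this
  · intro e e' hee s t h
    dsimp only at h
    have hd : ¬ ((uv e).1 = (uv e').1 ∧ (uv e).2 = (uv e').2) := by
      rintro ⟨a, b⟩
      apply hee
      apply Subtype.ext
      rw [huv e, huv e', a, b]
    have l1 : enc (uv e).1 < enc (uv e).2 := (h2 _ (hmem e)).1
    have l2 : enc (uv e').1 < enc (uv e').2 := (h2 _ (hmem e')).1
    have h' := seg_orient h
    have za : ∀ a b : ℤ × ℤ, orient a b a = 0 := by intro a b; simp [orient]
    have zb : ∀ a b : ℤ × ℤ, orient a b b = 0 := by intro a b; simp only [orient]; ring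
    have case1 : ((uv e').1 = (uv e).1 ∨ (uv e').1 = (uv e).2) →
        seg (castPt (Q (uv e).1)) (castPt (Q (uv e).2)) s ∈ Set.range (fun v => castPt (Q v)) := by
      intro hc
      have z : orient (Q (uv e).1) (Q (uv e).2) (Q (uv e').1) = 0 := by
        rcases hc with hc | hc <;> rw [hc]
        · exact za _ _
        · exact zb _ _
      have nz := hor e (uv e').2 (by rintro hx; rcases hc with hc | hc <;> grind)
        (by rintro hx; rcases hc with hc | hc <;> grind)
      rw [z] at h'
      have : (t : ℝ) = 0 := by
        simpa [nz] using h'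
      refine ⟨(uv e').1, ?_⟩
      rw [h, this]; simp [seg]
    have case2 : ((uv e').2 = (uv e).1 ∨ (uv e').2 = (uv e).2) →
        seg (castPt (Q (uv e).1)) (castPt (Q (uv e).2)) s ∈ Set.range (fun v => castPt (Q v)) := by
      intro hc
      have z : orient (Q (uv e).1) (Q (uv e).2) (Q (uv e').2) = 0 := by
        rcases hc with hc | hc <;> rw [hc]
        · exact za _ _
        · exact zb _ _
      have nz := hor e (uv e').1 (by rintro hx; rcases hc with hc | hc <;> grind)
        (by rintro hx; rcases hc with hc | hc <;> grind)
      rw [z] at h'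
      have : 1 - (t : ℝ) = 0 := by
        simpa [nz] using h'
      have : (t : ℝ) = 1 := by linarith
      refine ⟨(uv e').2, ?_⟩
      rw [h, this]; simp [seg]
    rcases h3 _ (hmem e) _ (hmem e') with ((((h4 | h4) | h4) | h4) | h4) | h4
    · exact case1 (Or.inl (henc h4).symm)
    · exact case2 (Or.inl (henc h4).symm)
    · exact case1 (Or.inr (henc h4).symm)
    · exact case2 (Or.inr (henc h4).symm)
    · simp only [sepEdges, decide_eq_true_eq] at h4
      exact absurd h (seg_sep t.2.1 t.2.2 h4)
    · simp only [sepEdges, decide_eq_true_eq] at h4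
      exact absurd h.symm (seg_sep s.2.1 s.2.2 h4)

theorem chk0 : checkDraw pts0 edg0 = true := by decide +kernel
theorem chk1 : checkDraw pts1 edg1 = true := by decide +kernel
theorem chk2 : checkDraw pts2 edg2 = true := by decide +kernel
theorem chk3 : checkDraw pts3 edg3 = true := by decide +kernel

def off28 : Fin 3 → ℕ := ![0, 2, 15]
def prt28 (n : ℕ) : ℕ := if n < 2 then 0 else if n < 15 then 1 else 2

def val28 : (i : Fin 3) → (![Fin 2, Fin 13, Fin 13] i) → ℕ
  | 0 => fun a => (show Fin 2 from a).val
  | 1 => fun a => 2 + (show Fin 13 from a).val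
  | 2 => fun a => 15 + (show Fin 13 from a).val

abbrev V28 := Σ i, (![Fin 2, Fin 13, Fin 13] i)

def enc28 (v : V28) : ℕ := val28 v.1 v.2

theorem enc28_lt (v : V28) : enc28 v < 28 := by
  obtain ⟨i, a⟩ := v
  fin_cases i
  · exact lt_trans (show Fin 2 from a).isLt (by norm_num)
  · exact lt_of_lt_of_le (Nat.add_lt_add_left (show Fin 13 from a).isLt 2) (by norm_num)
  · exact lt_of_lt_of_le (Nat.add_lt_add_left (show Fin 13 from a).isLt 15) (by norm_num)

theorem enc28_prt (v : V28) : prt28 (enc28 v) = v.1.val := by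
  obtain ⟨i, a⟩ := v
  fin_cases i
  · have h : enc28 ⟨0, a⟩ < 2 := (show Fin 2 from a).isLt
    change prt28 (enc28 ⟨0, a⟩) = 0
    simp [prt28, h]
  · have h : enc28 ⟨1, a⟩ = 2 + (show Fin 13 from a).val := rfl
    have h2 := (show Fin 13 from a).isLt
    change prt28 (enc28 ⟨1, a⟩) = 1
    rw [h]; simp only [prt28]; split_ifs <;> omega
  · have h : enc28 ⟨2, a⟩ = 15 + (show Fin 13 from a).val := rfl
    have h2 := (show Fin 13 from a).isLt
    change prt28 (enc28 ⟨2, a⟩) = 2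
    rw [h]; simp only [prt28]; split_ifs <;> omega

theorem enc28_inj : Function.Injective enc28 := by
  intro u v h
  have hp : u.1 = v.1 := by
    apply Fin.ext
    rw [← enc28_prt, ← enc28_prt, h]
  obtain ⟨i, a⟩ := u
  obtain ⟨j, b⟩ := v
  dsimp only at hp
  subst hp
  congr 1
  fin_cases i
  · exact Fin.ext (n := 2) h
  · exact Fin.ext (n := 13) (Nat.add_left_cancel (n := 2) h)
  · exact Fin.ext (n := 13) (Nat.add_left_cancel (n := 15) h)

def edgs : Fin 4 → List (ℕ × ℕ) := ![edg0, edg1, edg2, edg3]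
def ptss : Fin 4 → List (ℤ × ℤ) := ![pts0, pts1, pts2, pts3]

theorem chk : ∀ i, checkDraw (ptss i) (edgs i) = true := by
  intro i
  fin_cases i
  · exact chk0
  · exact chk1
  · exact chk2
  · exact chk3

def coverChk : Bool := (List.range 28).all fun u => (List.range 28).all fun v =>
  prt28 u == prt28 v || v ≤ u ||
    edg0.contains (u, v) || edg1.contains (u, v) || edg2.contains (u, v) || edg3.contains (u, v)

theorem coverChk_true : coverChk = true := by decide +kernel

def layer (i : Fin 4) : SimpleGraph V28 where
  Adj u v := u.1 ≠ v.1 ∧ ((enc28 u, enc28 v) ∈ edgs i ∨ (enc28 v, enc28 u) ∈ edgs i)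
  symm := ⟨fun _ _ h => ⟨h.1.symm, h.2.symm⟩⟩
  loopless := ⟨fun _ h => h.1 rfl⟩

theorem upper28 : ∃ H : Fin 4 → SimpleGraph V28,
    (∀ i, H i ≤ completeMultipartiteGraph ![Fin 2, Fin 13, Fin 13]) ∧ (∀ i, IsPlanar (H i)) ∧
      (⨆ i, H i) = completeMultipartiteGraph ![Fin 2, Fin 13, Fin 13] := by
  have hle : ∀ i, layer i ≤ completeMultipartiteGraph ![Fin 2, Fin 13, Fin 13] := by
    intro i u v h
    exact h.1
  have key : ∀ u v : V28, u.1 ≠ v.1 → enc28 u < enc28 v → ∃ i, (enc28 u, enc28 v) ∈ edgs i := by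
    intro u v h hlt
    have hc := coverChk_true
    simp only [coverChk, List.all_eq_true, List.mem_range, Bool.or_eq_true, beq_iff_eq,
      decide_eq_true_eq, List.contains_iff_mem] at hc
    rcases hc _ (enc28_lt u) _ (enc28_lt v) with ((((hc | hc) | hc) | hc) | hc) | hc
    · rw [enc28_prt, enc28_prt] at hc
      exact absurd (Fin.ext hc) h
    · omega
    · exact ⟨0, hc⟩
    · exact ⟨1, hc⟩
    · exact ⟨2, hc⟩
    · exact ⟨3, hc⟩
  refine ⟨layer, hle, ?_, ?_⟩
  · intro i
    exact planar_of_check _ enc28 enc28_inj enc28_lt (ptss i) (edgs i) (chk i) fun u v h => h.2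
  · apply le_antisymm (iSup_le hle)
    intro u v h
    have h : u.1 ≠ v.1 := h
    rw [SimpleGraph.iSup_adj]
    have hne : enc28 u ≠ enc28 v := fun h' => h (by rw [enc28_inj h'])
    rcases lt_or_gt_of_ne hne with hl | hl
    · obtain ⟨i, hi⟩ := key u v h hl
      exact ⟨i, h, Or.inl hi⟩
    · obtain ⟨i, hi⟩ := key v u h.symm hl
      exact ⟨i, h, Or.inr hi⟩

abbrev LEdge := (ℤ × ℤ) × Bool

def ltgt (l : LEdge) : ℤ × ℤ := if l.2 then (l.1.1 + 1, l.1.2) else (l.1.1, l.1.2 + 1)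

/-- the square on the other side of the lattice edge -/
def lopp (l : LEdge) : ℤ × ℤ := if l.2 then (l.1.1, l.1.2 - 1) else (l.1.1 - 1, l.1.2)

def lbd (c : LEdge → ZMod 2) (p : ℤ × ℤ) : ZMod 2 :=
  c (p, true) + c ((p.1 - 1, p.2), true) + c (p, false) + c ((p.1, p.2 - 1), false)

theorem zz (a : ZMod 2) : a + a = 0 := CharTwo.add_self_eq_zero a

theorem lbd_fill (c : LEdge → ZMod 2) (j0 : ℤ) (hj : ∀ l : LEdge, l.1.2 < j0 → c l = 0)
    (hc : ∀ p, lbd c p = 0) :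
    ∃ w : ℤ × ℤ → ZMod 2, ∀ l : LEdge, w l.1 + w (lopp l) = c l := by
  have hI : ∀ j : ℤ, j0 ≤ j → Finset.Icc j0 j = insert j (Finset.Icc j0 (j - 1)) := by
    intro j h; ext k; simp only [Finset.mem_Icc, Finset.mem_insert]; omega
  have hE : ∀ j : ℤ, j < j0 → Finset.Icc j0 j = ∅ := by
    intro j h; simp [h]
  have key : ∀ (g : ℤ → ZMod 2) (j : ℤ), j0 ≤ j → ∑ k ∈ Finset.Icc j0 j, g k
      = g j + ∑ k ∈ Finset.Icc j0 (j - 1), g k := by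
    intro g j h
    rw [hI j h, Finset.sum_insert]; simp
  refine ⟨fun p => ∑ k ∈ Finset.Icc j0 p.2, c ((p.1, k), true), ?_⟩
  rintro ⟨⟨x, y⟩, b⟩
  cases b
  · simp only [lopp, Bool.false_eq_true, if_false]
    have main : ∀ n : ℕ, ∑ k ∈ Finset.Icc j0 (j0 + n), c ((x, k), true)
        + ∑ k ∈ Finset.Icc j0 (j0 + n), c ((x - 1, k), true) = c ((x, j0 + n), false) := by
      intro n
      induction n with
      | zero =>
        have h1 := hc (x, j0)
        have h2 := hj ((x, j0 - 1), false) (by simp)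
        simp only [lbd] at h1
        rw [h2] at h1
        simp
        grind
      | succ n ih =>
        rw [key _ _ (by push_cast; omega), key (fun k => c ((x - 1, k), true)) _ (by push_cast; omega)]
        have e : j0 + ((n + 1 : ℕ) : ℤ) - 1 = j0 + n := by push_cast; ring
        rw [e]
        have h1 := hc (x, j0 + ((n + 1 : ℕ) : ℤ))
        simp only [lbd] at h1
        rw [e] at h1
        grind
    by_cases h : y < j0
    · rw [hE y h, hj _ h]; simp
    · have := main (y - j0).toNat
      rw [Int.toNat_of_nonneg (by omega)] at this
      simpa using this
  · simp only [lopp, if_true]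
    by_cases h : y < j0
    · rw [hE y h, hE (y-1) (by omega), hj _ h]; simp
    · rw [key _ y (by omega), add_assoc, zz, add_zero]

theorem lbd_cobd (w : ℤ × ℤ → ZMod 2) (p : ℤ × ℤ) :
    lbd (fun l => w l.1 + w (lopp l)) p = 0 := by
  obtain ⟨x, y⟩ := p
  simp only [lbd, lopp, if_true, Bool.false_eq_true, if_false]
  grind

theorem lbd_add (c d : LEdge → ZMod 2) (p) : lbd (c + d) p = lbd c p + lbd d p := by
  simp only [lbd, Pi.add_apply]; ring

theorem lbd_smul (a : ZMod 2) (d : LEdge → ZMod 2) (p) : lbd (a • d) p = a * lbd d p := by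
  simp only [lbd, Pi.smul_apply, smul_eq_mul]; ring

theorem lbd_sum {ι : Type*} (s : Finset ι) (d : ι → LEdge → ZMod 2) (p) :
    lbd (∑ i ∈ s, d i) p = ∑ i ∈ s, lbd (d i) p := by
  classical
  induction s using Finset.induction_on with
  | empty => simp [lbd]
  | insert a s ha ih => rw [Finset.sum_insert ha, Finset.sum_insert ha, lbd_add, ih]

theorem lbd_single (l : LEdge) (p : ℤ × ℤ) :
    lbd (Pi.single l 1) p = (if l.1 = p then 1 else 0) + (if ltgt l = p then 1 else 0) := by
  obtain ⟨⟨x, y⟩, b⟩ := l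
  obtain ⟨x', y'⟩ := p
  cases b <;> simp only [lbd, ltgt, Pi.single_apply, Prod.mk.injEq] <;> grind

/-- sums of a boundary over a finite set -/
theorem lbd_blob (S : Finset LEdge) (c : LEdge → ZMod 2) (hS : ∀ l, l ∉ S → c l = 0)
    (B : Finset (ℤ × ℤ)) :
    ∑ p ∈ B, lbd c p = ∑ l ∈ S, c l * ((if l.1 ∈ B then 1 else 0) + (if ltgt l ∈ B then 1 else 0)) := by
  classical
  have hc : c = ∑ l ∈ S, c l • (Pi.single l 1 : LEdge → ZMod 2) := by
    funext m
    rw [Finset.sum_apply]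
    simp only [Pi.smul_apply, Pi.single_apply, smul_eq_mul, mul_ite, mul_one, mul_zero]
    rw [Finset.sum_ite_eq]
    split_ifs with h
    · rfl
    · exact hS m h
  have : ∀ p, lbd c p = ∑ l ∈ S, c l * lbd (Pi.single l 1) p := by
    intro p
    conv_lhs => rw [hc]
    rw [lbd_sum]
    simp only [lbd_smul]
  simp only [this, lbd_single]
  rw [Finset.sum_comm]
  refine Finset.sum_congr rfl fun l _ => ?_
  rw [← Finset.mul_sum, Finset.sum_add_distrib, Finset.sum_ite_eq, Finset.sum_ite_eq]

def ladj (p q : ℤ × ℤ) : Prop := ∃ l : LEdge, (l.1 = p ∧ ltgt l = q) ∨ (l.1 = q ∧ ltgt l = p)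

def lconn (B : Set (ℤ × ℤ)) : ℤ × ℤ → ℤ × ℤ → Prop :=
  Relation.ReflTransGen (fun p q => p ∈ B ∧ q ∈ B ∧ ladj p q)

theorem ladj_symm {p q} (h : ladj p q) : ladj q p := by
  obtain ⟨l, h⟩ := h; exact ⟨l, h.symm⟩

theorem lconn_symm {B : Set (ℤ × ℤ)} {p q} (h : lconn B p q) : lconn B q p := by
  induction h with
  | refl => exact Relation.ReflTransGen.refl
  | tail _ h ih => exact Relation.ReflTransGen.head ⟨h.2.1, h.1, ladj_symm h.2.2⟩ ih

theorem lconn_mono {B B' : Set (ℤ × ℤ)} (hB : B ⊆ B') {p q} (h : lconn B p q) : lconn B' p q :=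
  Relation.ReflTransGen.mono (fun _ _ h => ⟨hB h.1, hB h.2.1, h.2.2⟩) _ _ h

theorem lconn_chain {B : Set (ℤ × ℤ)} {p q} (h : lconn B p q) :
    ∃ c : LEdge → ZMod 2, (∀ l, c l ≠ 0 → l.1 ∈ B ∧ ltgt l ∈ B) ∧
      ∀ r, lbd c r = (if p = r then 1 else 0) + (if q = r then 1 else 0) := by
  classical
  induction h with
  | refl => exact ⟨0, by simp, fun r => by rw [zz]; simp [lbd]⟩
  | @tail q q' _ h ih =>
    obtain ⟨c, h1, h2⟩ := ih
    obtain ⟨hq, hq', l, hl⟩ := h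
    refine ⟨c + Pi.single l 1, ?_, ?_⟩
    · intro m hm
      by_cases hml : m = l
      · subst hml
        rcases hl with ⟨a, b⟩ | ⟨a, b⟩ <;> rw [a, b] <;> exact ⟨by assumption, by assumption⟩
      · apply h1
        simpa [Pi.single_apply, hml] using hm
    · intro r
      rw [lbd_add, h2, lbd_single]
      rcases hl with ⟨a, b⟩ | ⟨a, b⟩ <;> rw [a, b] <;> grind

theorem lconn_first {N Q : Set (ℤ × ℤ)} {p q} (h : lconn N p q) (hp : p ∉ Q) (hq : q ∈ Q) :
    ∃ p' q', lconn (N \ Q) p p' ∧ ladj p' q' ∧ p' ∉ Q ∧ q' ∈ Q ∧ p' ∈ N ∧ q' ∈ N := by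
  induction h using Relation.ReflTransGen.head_induction_on with
  | refl => exact absurd hq hp
  | @head a c h _ ih =>
    by_cases hc : c ∈ Q
    · exact ⟨a, c, Relation.ReflTransGen.refl, h.2.2, hp, hc, h.1, h.2.1⟩
    · obtain ⟨p', q', h1, h2⟩ := ih hc
      exact ⟨p', q', Relation.ReflTransGen.head ⟨⟨h.1, hp⟩, ⟨h.2.1, hc⟩, h.2.2⟩ h1, h2⟩
section model

set_option linter.unusedSectionVars false

variable {X Y E : Type} [Fintype X] [Fintype Y] [Fintype E] [DecidableEq X] [DecidableEq Y]
  [DecidableEq E]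

/-- the cycle space of a bipartite graph with edge ends `a`, `b` -/
def bdE (a : E → X) (b : E → Y) : (E → ZMod 2) →ₗ[ZMod 2] (X ⊕ Y → ZMod 2) where
  toFun C v := ∑ e, C e * ((if Sum.inl (a e) = v then 1 else 0) + (if Sum.inr (b e) = v then 1 else 0))
  map_add' C D := by
    funext v; simp only [Pi.add_apply, add_mul, Finset.sum_add_distrib]
  map_smul' r C := by
    funext v; simp only [Pi.smul_apply, smul_eq_mul, RingHom.id_apply, Finset.mul_sum, mul_assoc]

theorem bdE_inl (a : E → X) (b : E → Y) (C : E → ZMod 2) (x : X) :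
    bdE a b C (Sum.inl x) = ∑ e, if a e = x then C e else 0 := by
  simp [bdE]

theorem bdE_inr (a : E → X) (b : E → Y) (C : E → ZMod 2) (y : Y) :
    bdE a b C (Sum.inr y) = ∑ e, if b e = y then C e else 0 := by
  simp [bdE]

theorem other_edge {W : Type} [DecidableEq W] (g : E → W) (C : E → ZMod 2) (w : W)
    (h : (∑ e, if g e = w then C e else 0) = 0) (e0 : E) (h0 : C e0 ≠ 0) (hw : g e0 = w) :
    ∃ e1, e1 ≠ e0 ∧ C e1 ≠ 0 ∧ g e1 = w := by
  by_contra hcon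
  push Not at hcon
  rw [Finset.sum_eq_single e0] at h
  · simp [hw, h0] at h
  · intro e _ he
    by_cases hC : C e = 0
    · simp [hC]
    · simp [hcon e he hC]
  · simp

theorem four_le (a : E → X) (b : E → Y) (hab : ∀ e e', a e = a e' → b e = b e' → e = e')
    (C : E → ZMod 2) (hC : bdE a b C = 0) (e0 : E) (h0 : C e0 ≠ 0) :
    4 ≤ (Finset.univ.filter fun e => C e ≠ 0).card := by
  have hx : ∀ x, (∑ e, if a e = x then C e else 0) = 0 := by
    intro x; rw [← bdE_inl a b C x, hC]; rfl
  have hy : ∀ y, (∑ e, if b e = y then C e else 0) = 0 := by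
    intro y; rw [← bdE_inr a b C y, hC]; rfl
  obtain ⟨e1, n1, c1, a1⟩ := other_edge a C _ (hx (a e0)) e0 h0 rfl
  obtain ⟨e2, n2, c2, b2⟩ := other_edge b C _ (hy (b e0)) e0 h0 rfl
  obtain ⟨e3, n3, c3, b3⟩ := other_edge b C _ (hy (b e1)) e1 c1 rfl
  have hb1 : b e1 ≠ b e0 := fun h => n1 (hab _ _ a1 h)
  have ha2 : a e2 ≠ a e0 := fun h => n2 (hab _ _ h b2)
  have ha3 : a e3 ≠ a e1 := fun h => n3 (hab _ _ h b3)
  have : ({e0, e1, e2, e3} : Finset E) ⊆ Finset.univ.filter fun e => C e ≠ 0 := by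
    intro e he
    simp only [Finset.mem_insert, Finset.mem_singleton] at he
    simp only [Finset.mem_filter, Finset.mem_univ, true_and]
    rcases he with rfl | rfl | rfl | rfl <;> assumption
  refine le_trans ?_ (Finset.card_le_card this)
  have d01 : e0 ≠ e1 := n1.symm
  have d02 : e0 ≠ e2 := n2.symm
  have d03 : e0 ≠ e3 := by rintro rfl; exact hb1 b3.symm
  have d12 : e1 ≠ e2 := by rintro rfl; exact hb1 b2
  have d13 : e1 ≠ e3 := n3.symm
  have d23 : e2 ≠ e3 := by rintro rfl; exact hb1 (b3.symm.trans b2)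
  rw [Finset.card_insert_of_notMem (by simp [d01, d02, d03]),
    Finset.card_insert_of_notMem (by simp [d12, d13]),
    Finset.card_insert_of_notMem (by simp [d23]), Finset.card_singleton]

theorem card_cycle (a : E → X) (b : E → Y) :
    2 ^ Fintype.card E ≤ Nat.card (LinearMap.ker (bdE a b)) *
      2 ^ (Fintype.card X + Fintype.card Y) := by
  have h := LinearMap.finrank_range_add_finrank_ker (bdE a b)
  have h2 := Submodule.finrank_le (LinearMap.range (bdE a b))
  rw [Module.finrank_fintype_fun_eq_card] at h h2
  rw [Fintype.card_sum] at h2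
  have h3 : Nat.card (LinearMap.ker (bdE a b)) = 2 ^ Module.finrank (ZMod 2) (LinearMap.ker (bdE a b)) := by
    rw [Module.natCard_eq_pow_finrank (K := ZMod 2)]; simp
  rw [h3, ← pow_add]
  exact Nat.pow_le_pow_right (by norm_num) (by omega)

theorem model_bound (a : E → X) (b : E → Y) (hab : ∀ e e', a e = a e' → b e = b e' → e = e')
    (B : X ⊕ Y → Finset (ℤ × ℤ)) (hdis : ∀ v w p, p ∈ B v → p ∈ B w → v = w)
    (root : X ⊕ Y → ℤ × ℤ)
    (hconn : ∀ v, ∀ p ∈ B v, lconn (B v) (root v) p)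
    (hedge : ∀ e, ∃ p ∈ B (Sum.inl (a e)), ∃ q ∈ B (Sum.inr (b e)), ladj p q) :
    Fintype.card E ≤ 2 * (Fintype.card X + Fintype.card Y) := by
  classical
  choose p hp q hq l hl using hedge
  have hlB : ∀ e, ∀ v, ((if (l e).1 ∈ B v then (1 : ZMod 2) else 0) + (if ltgt (l e) ∈ B v then 1 else 0))
      = ((if Sum.inl (a e) = v then 1 else 0) + (if Sum.inr (b e) = v then 1 else 0)) := by
    intro e v
    have e1 : p e ∈ B v ↔ Sum.inl (a e) = v :=
      ⟨fun h => hdis _ _ _ (hp e) h, fun h => h ▸ hp e⟩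
    have e2 : q e ∈ B v ↔ Sum.inr (b e) = v :=
      ⟨fun h => hdis _ _ _ (hq e) h, fun h => h ▸ hq e⟩
    rcases hl e with ⟨h1, h2⟩ | ⟨h1, h2⟩
    · rw [h1, h2]; simp only [e1, e2]
    · rw [h1, h2, add_comm]; simp only [e1, e2]
  have hlbd : ∀ e r, lbd (Pi.single (l e) 1) r
      = (if p e = r then 1 else 0) + (if q e = r then 1 else 0) := by
    intro e r
    rw [lbd_single]
    rcases hl e with ⟨h1, h2⟩ | ⟨h1, h2⟩ <;> rw [h1, h2]
    rw [add_comm]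
  have hlinj : ∀ e e', l e = l e' → e = e' := by
    intro e e' h
    have key : ∀ v : X ⊕ Y, ((if Sum.inl (a e) = v then (1 : ZMod 2) else 0) + (if Sum.inr (b e) = v then 1 else 0))
      = ((if Sum.inl (a e') = v then 1 else 0) + (if Sum.inr (b e') = v then 1 else 0)) := by
      intro v; rw [← hlB, ← hlB, h]
    apply hab
    · have := key (Sum.inl (a e'))
      by_contra hne
      simp [hne] at this
    · have := key (Sum.inr (b e'))
      by_contra hne
      simp [hne] at this
  -- lattice edges inside a blob
  let inB : LEdge → Prop := fun m => ∃ v, m.1 ∈ B v ∧ ltgt m ∈ B v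
  have hlnot : ∀ e, ¬ inB (l e) := by
    rintro e ⟨v, h1, h2⟩
    have := hlB e v
    rw [if_pos h1, if_pos h2] at this
    rcases hl e with ⟨h3, h4⟩ | ⟨h3, h4⟩
    · rw [h3] at h1; rw [h4] at h2
      exact absurd ((hdis _ _ _ h1 (hp e)).symm.trans (hdis _ _ _ h2 (hq e))) (by simp)
    · rw [h3] at h1; rw [h4] at h2
      exact absurd ((hdis _ _ _ h2 (hp e)).symm.trans (hdis _ _ _ h1 (hq e))) (by simp)
  let BB : Finset (ℤ × ℤ) := Finset.univ.biUnion B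
  let S : Finset LEdge := (BB ×ˢ Finset.univ).filter inB ∪ Finset.univ.image l
  have hS : ∀ m, m ∈ S ↔ inB m ∨ ∃ e, l e = m := by
    intro m
    simp only [S, Finset.mem_union, Finset.mem_filter, Finset.mem_product, Finset.mem_univ,
      and_true, Finset.mem_image, true_and, BB, Finset.mem_biUnion]
    constructor
    · rintro (⟨_, h⟩ | h)
      · exact Or.inl h
      · exact Or.inr h
    · rintro (h | h)
      · exact Or.inl ⟨⟨h.choose, h.choose_spec.1⟩, h⟩
      · exact Or.inr h
  -- projection of lattice cycles
  have hproj : ∀ c : LEdge → ZMod 2, (∀ m, m ∉ S → c m = 0) → (∀ r, lbd c r = 0) →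
      bdE a b (fun e => c (l e)) = 0 := by
    intro c hcS hc0
    funext v
    have h1 := lbd_blob S c hcS (B v)
    simp only [hc0, Finset.sum_const_zero] at h1
    rw [Finset.sum_union] at h1
    · rw [Finset.sum_eq_zero, zero_add, Finset.sum_image] at h1
      · simp only [hlB] at h1
        exact h1.symm
      · intro e _ e' _ h; exact hlinj _ _ h
      · intro m hm
        obtain ⟨w, h2, h3⟩ := (Finset.mem_filter.1 hm).2
        have e1 : m.1 ∈ B v ↔ w = v := ⟨fun h => hdis _ _ _ h2 h, fun h => h ▸ h2⟩
        have e2 : ltgt m ∈ B v ↔ w = v := ⟨fun h => hdis _ _ _ h3 h, fun h => h ▸ h3⟩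
        simp only [e1, e2, zz, mul_zero]
    · rw [Finset.disjoint_left]
      intro m hm hm'
      obtain ⟨e, _, rfl⟩ := Finset.mem_image.1 hm'
      exact hlnot e (Finset.mem_filter.1 hm).2
  -- lifting of an edge
  have hT : ∀ e, ∃ c : LEdge → ZMod 2, (∀ m, m ∉ S → c m = 0) ∧
      (∀ e', c (l e') = if e = e' then 1 else 0) ∧
      ∀ r, lbd c r = (if root (Sum.inl (a e)) = r then 1 else 0)
        + (if root (Sum.inr (b e)) = r then 1 else 0) := by
    intro e
    obtain ⟨c1, h1, h1'⟩ := lconn_chain (hconn _ _ (hp e))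
    obtain ⟨c2, h2, h2'⟩ := lconn_chain (hconn _ _ (hq e))
    have k1 : ∀ m, ¬ inB m → c1 m = 0 := by
      intro m hm; by_contra h; exact hm ⟨_, h1 m h⟩
    have k2 : ∀ m, ¬ inB m → c2 m = 0 := by
      intro m hm; by_contra h; exact hm ⟨_, h2 m h⟩
    refine ⟨c1 + Pi.single (l e) 1 + c2, ?_, ?_, ?_⟩
    · intro m hm
      rw [hS] at hm
      push Not at hm
      have : m ≠ l e := fun h => hm.2 e h.symm
      simp [k1 m hm.1, k2 m hm.1, Pi.single_apply, this]
    · intro e'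
      simp only [Pi.add_apply, k1 _ (hlnot e'), k2 _ (hlnot e'), Pi.single_apply, zero_add, add_zero]
      by_cases h : e = e'
      · simp [h]
      · rw [if_neg h, if_neg]; exact fun h' => h (hlinj _ _ h').symm
    · intro r
      rw [lbd_add, lbd_add, h1', h2', hlbd]
      grind
  choose T hT1 hT2 hT3 using hT
  -- lower bound for the support
  obtain ⟨j0, hj0⟩ : ∃ j0 : ℤ, ∀ m ∈ S, j0 ≤ m.1.2 := by
    obtain ⟨j0, h⟩ := (S.image fun m => m.1.2).bddBelow
    exact ⟨j0, fun m hm => h (Finset.mem_coe.2 (Finset.mem_image_of_mem (fun m => m.1.2) hm))⟩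
  let Z := LinearMap.ker (bdE a b)
  have hw : ∀ C : Z, ∃ w : ℤ × ℤ → ZMod 2, (∀ m, m ∉ S → w m.1 = w (lopp m)) ∧
      ∀ e, w (l e).1 + w (lopp (l e)) = C.1 e := by
    rintro ⟨C, hC⟩
    have hC : bdE a b C = 0 := hC
    let c : LEdge → ZMod 2 := ∑ e, C e • T e
    have c1 : ∀ m, m ∉ S → c m = 0 := by
      intro m hm
      simp only [c, Finset.sum_apply, Pi.smul_apply, hT1 _ m hm, smul_zero, Finset.sum_const_zero]
    have c2 : ∀ e, c (l e) = C e := by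
      intro e
      simp [c, Finset.sum_apply, hT2]
    have c3 : ∀ r, lbd c r = 0 := by
      intro r
      simp only [c, lbd_sum, lbd_smul, hT3]
      have : ∀ e, C e * ((if root (Sum.inl (a e)) = r then (1 : ZMod 2) else 0)
          + (if root (Sum.inr (b e)) = r then 1 else 0))
          = ∑ v : X ⊕ Y, (if root v = r then 1 else 0) *
            (C e * ((if Sum.inl (a e) = v then 1 else 0) + (if Sum.inr (b e) = v then 1 else 0))) := by
        intro e
        simp [mul_add, Finset.sum_add_distrib]
      simp only [this]
      rw [Finset.sum_comm]
      refine Finset.sum_eq_zero fun v _ => ?_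
      rw [← Finset.mul_sum]
      have : bdE a b C v = 0 := by rw [hC]; rfl
      rw [show (∑ e, C e * ((if Sum.inl (a e) = v then (1 : ZMod 2) else 0) + (if Sum.inr (b e) = v then 1 else 0))) = 0 from this, mul_zero]
    obtain ⟨w, hw⟩ := lbd_fill c j0 (fun m hm => c1 m fun h => absurd (hj0 m h) (not_le.2 hm)) c3
    refine ⟨w, ?_, ?_⟩
    · intro m hm
      have := hw m
      rw [c1 m hm] at this
      exact CharTwo.add_eq_zero.1 this
    · intro e
      rw [hw, c2]
  choose w hw1 hw2 using hw
  let W : ℤ × ℤ → (Z → ZMod 2) := fun s C => w C s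
  have hW1 : ∀ m, m ∉ S → W m.1 = W (lopp m) := fun m hm => funext fun C => hw1 C m hm
  let bg : (Z → ZMod 2) → LEdge → ZMod 2 := fun g m =>
    (if W m.1 = g then 1 else 0) + (if W (lopp m) = g then 1 else 0)
  have hbg : ∀ g, bdE a b (fun e => bg g (l e)) = 0 := by
    intro g
    apply hproj
    · intro m hm
      simp only [bg, hW1 m hm, zz]
    · intro r
      exact lbd_cobd (fun s => if W s = g then 1 else 0) r
  let A : Finset (Z → ZMod 2) := Finset.univ.filter fun g => ∃ e, bg g (l e) ≠ 0
  have hA4 : 4 * A.card ≤ 2 * Fintype.card E := by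
    have h1 : ∑ g ∈ A, 4 ≤ ∑ g ∈ A, (Finset.univ.filter fun e => bg g (l e) ≠ 0).card := by
      refine Finset.sum_le_sum fun g hg => ?_
      obtain ⟨e, he⟩ := (Finset.mem_filter.1 hg).2
      exact four_le a b hab _ (hbg g) e he
    have h2 : ∑ g ∈ A, (Finset.univ.filter fun e => bg g (l e) ≠ 0).card
        = ∑ e : E, (A.filter fun g => bg g (l e) ≠ 0).card :=
      Finset.sum_card_bipartiteAbove_eq_sum_card_bipartiteBelow (fun g e => bg g (l e) ≠ 0)
    have h3 : ∑ e : E, (A.filter fun g => bg g (l e) ≠ 0).card ≤ ∑ e : E, 2 := by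
      refine Finset.sum_le_sum fun e _ => ?_
      refine le_trans (Finset.card_le_card (t := {W (l e).1, W (lopp (l e))}) ?_) Finset.card_le_two
      intro g hg
      have hg := (Finset.mem_filter.1 hg).2
      by_contra hn
      simp only [Finset.mem_insert, Finset.mem_singleton, not_or] at hn
      apply hg
      simp only [bg]
      rw [if_neg (fun h => hn.1 h.symm), if_neg (fun h => hn.2 h.symm), add_zero]
    simp only [Finset.sum_const, smul_eq_mul, Finset.card_univ] at h1 h3
    omega
  have hinj : Function.Injective (fun (C : Z) (g : A) => g.1 C) := by
    intro C D h
    have h : ∀ g ∈ A, g C = g D := fun g hg => congrFun h ⟨g, hg⟩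
    apply Subtype.ext
    funext e
    by_cases hs : W (l e).1 = W (lopp (l e))
    · have : ∀ C : Z, C.1 e = 0 := by
        intro C
        rw [← hw2 C e]
        have : w C (l e).1 = w C (lopp (l e)) := congrFun hs C
        rw [this, zz]
      rw [this, this]
    · have m1 : W (l e).1 ∈ A := by
        refine Finset.mem_filter.2 ⟨Finset.mem_univ _, e, ?_⟩
        simp only [bg]
        rw [if_pos trivial, if_neg (fun h => hs h.symm)]; simp
      have m2 : W (lopp (l e)) ∈ A := by
        refine Finset.mem_filter.2 ⟨Finset.mem_univ _, e, ?_⟩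
        simp only [bg]
        rw [if_pos trivial, if_neg hs]; simp
      rw [← hw2 C e, ← hw2 D e]
      have k1 : w C (l e).1 = w D (l e).1 := h _ m1
      have k2 : w C (lopp (l e)) = w D (lopp (l e)) := h _ m2
      rw [k1, k2]
  have hcard := Nat.card_le_card_of_injective _ hinj
  have hc2 : Nat.card (A → ZMod 2) = 2 ^ A.card := by
    simp [Nat.card_eq_fintype_card]
  rw [hc2] at hcard
  have hcc := card_cycle a b
  have : 2 ^ Fintype.card E ≤ 2 ^ (A.card + (Fintype.card X + Fintype.card Y)) := by
    rw [pow_add]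
    exact hcc.trans (Nat.mul_le_mul_right _ hcard)
  have := (Nat.pow_le_pow_iff_right (by norm_num)).1 this
  omega

end model

section topo

def lbox (R : ℝ) (x : ℝ × ℝ) : Set (ℤ × ℤ) :=
  {p | |(p.1 : ℝ) - R * x.1| ≤ 1 ∧ |(p.2 : ℝ) - R * x.2| ≤ 1}

def nbh (R : ℝ) (K : Set (ℝ × ℝ)) : Set (ℤ × ℤ) := {p | ∃ x ∈ K, p ∈ lbox R x}

theorem lbox_subset {R : ℝ} {K : Set (ℝ × ℝ)} {x : ℝ × ℝ} (hx : x ∈ K) : lbox R x ⊆ nbh R K :=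
  fun _ hp => ⟨x, hx, hp⟩

theorem round_mem_lbox (R : ℝ) (x : ℝ × ℝ) : (round (R * x.1), round (R * x.2)) ∈ lbox R x := by
  have h1 := abs_sub_round (R * x.1)
  have h2 := abs_sub_round (R * x.2)
  rw [abs_sub_comm] at h1 h2
  exact ⟨h1.trans (by norm_num), h2.trans (by norm_num)⟩

theorem lconn_horiz {B : Set (ℤ × ℤ)} (y x : ℤ) (n : ℕ)
    (h : ∀ k : ℕ, k ≤ n → (x + k, y) ∈ B) : lconn B (x, y) (x + n, y) := by
  induction n with
  | zero => simp only [Nat.cast_zero, add_zero]; exact Relation.ReflTransGen.refl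
  | succ n ih =>
    refine Relation.ReflTransGen.tail (ih fun k hk => h k (by omega))
      ⟨h n (by omega), h (n + 1) le_rfl, ((x + n, y), true), Or.inl ⟨rfl, ?_⟩⟩
    simp [ltgt, add_assoc]

theorem lconn_vert {B : Set (ℤ × ℤ)} (y x : ℤ) (n : ℕ)
    (h : ∀ k : ℕ, k ≤ n → (x, y + k) ∈ B) : lconn B (x, y) (x, y + n) := by
  induction n with
  | zero => simp only [Nat.cast_zero, add_zero]; exact Relation.ReflTransGen.refl
  | succ n ih =>
    refine Relation.ReflTransGen.tail (ih fun k hk => h k (by omega))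
      ⟨h n (by omega), h (n + 1) le_rfl, ((x, y + n), false), Or.inl ⟨rfl, ?_⟩⟩
    simp [ltgt, add_assoc]

theorem abs_between {u v k : ℤ} {c : ℝ} (h1 : u ≤ k) (h2 : k ≤ v) (hu : |(u : ℝ) - c| ≤ 1)
    (hv : |(v : ℝ) - c| ≤ 1) : |(k : ℝ) - c| ≤ 1 := by
  have h1 : (u : ℝ) ≤ k := by exact_mod_cast h1
  have h2 : (k : ℝ) ≤ v := by exact_mod_cast h2
  rw [abs_le] at *
  constructor <;> linarith [hu.1, hv.2]

theorem lbox_conn (R : ℝ) (x : ℝ × ℝ) {p q : ℤ × ℤ} (hp : p ∈ lbox R x) (hq : q ∈ lbox R x) :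
    lconn (lbox R x) p q := by
  have H : ∀ (u v y : ℤ), u ≤ v → (u, y) ∈ lbox R x → (v, y) ∈ lbox R x →
      lconn (lbox R x) (u, y) (v, y) := by
    intro u v y huv hu hv
    have := lconn_horiz (B := lbox R x) y u (v - u).toNat (fun k hk =>
      ⟨abs_between (u := u) (v := v) (by simp) (by simp; omega) hu.1 hv.1, hu.2⟩)
    rwa [Int.toNat_of_nonneg (by omega), add_sub_cancel] at this
  have Hv : ∀ (u v y : ℤ), u ≤ v → (y, u) ∈ lbox R x → (y, v) ∈ lbox R x →
      lconn (lbox R x) (y, u) (y, v) := by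
    intro u v y huv hu hv
    have := lconn_vert (B := lbox R x) u y (v - u).toNat (fun k hk =>
      ⟨hu.1, abs_between (u := u) (v := v) (by simp) (by simp; omega) hu.2 hv.2⟩)
    rwa [Int.toNat_of_nonneg (by omega), add_sub_cancel] at this
  obtain ⟨p1, p2⟩ := p
  obtain ⟨q1, q2⟩ := q
  have hm : (q1, p2) ∈ lbox R x := ⟨hq.1, hp.2⟩
  have s1 : lconn (lbox R x) (p1, p2) (q1, p2) := by
    rcases le_total p1 q1 with h | h
    · exact H _ _ _ h hp hm
    · exact lconn_symm (H _ _ _ h hm hp)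
  have s2 : lconn (lbox R x) (q1, p2) (q1, q2) := by
    rcases le_total p2 q2 with h | h
    · exact Hv _ _ _ h hm hq
    · exact lconn_symm (Hv _ _ _ h hq hm)
  exact Relation.ReflTransGen.trans s1 s2

theorem nbh_conn {R : ℝ} (hR : 0 < R) {K : Set (ℝ × ℝ)} (hK : IsPreconnected K) {p q : ℤ × ℤ}
    (hp : p ∈ nbh R K) (hq : q ∈ nbh R K) : lconn (nbh R K) p q := by
  obtain ⟨x, hx, hp⟩ := hp
  obtain ⟨y, hy, hq⟩ := hq
  have near : ∀ x ∈ K, ∀ y ∈ K, Dist.dist y x < 1 / (2 * R) → ∀ p ∈ lbox R x, ∀ q ∈ lbox R y,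
      lconn (nbh R K) p q := by
    intro x hx y hy hd p hp q hq
    have hc := round_mem_lbox R x
    have hc' : (round (R * x.1), round (R * x.2)) ∈ lbox R y := by
      have h1 := abs_sub_round (R * x.1)
      have h2 := abs_sub_round (R * x.2)
      rw [Prod.dist_eq, max_lt_iff, Real.dist_eq, Real.dist_eq] at hd
      have e : R * (1 / (2 * R)) = 1 / 2 := by field_simp
      have d1 : |R * y.1 - R * x.1| < 1 / 2 := by
        rw [← mul_sub, abs_mul, abs_of_pos hR, ← e]
        exact mul_lt_mul_of_pos_left hd.1 hR
      have d2 : |R * y.2 - R * x.2| < 1 / 2 := by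
        rw [← mul_sub, abs_mul, abs_of_pos hR, ← e]
        exact mul_lt_mul_of_pos_left hd.2 hR
      constructor
      · rw [abs_le] at *; rw [abs_lt] at d1; constructor <;> dsimp only <;> linarith [h1.1, h1.2, d1.1, d1.2]
      · rw [abs_le] at *; rw [abs_lt] at d2; constructor <;> dsimp only <;> linarith [h2.1, h2.2, d2.1, d2.2]
    exact Relation.ReflTransGen.trans (lconn_mono (lbox_subset hx) (lbox_conn R x hp hc))
      (lconn_mono (lbox_subset hy) (lbox_conn R y hc' hq))
  refine IsPreconnected.induction₂' hK
    (fun x y => ∀ p ∈ lbox R x, ∀ q ∈ lbox R y, lconn (nbh R K) p q) ?_ ?_ hx hy p hp q hq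
  · intro x hx
    have : ∀ᶠ y in nhdsWithin x K, Dist.dist y x < 1 / (2 * R) :=
      mem_nhdsWithin_of_mem_nhds (Metric.ball_mem_nhds x (by positivity))
    filter_upwards [this, self_mem_nhdsWithin] with y hy hyK
    exact ⟨near x hx y hyK hy, near y hyK x hx (by rwa [_root_.dist_comm])⟩
  · intro x y z _ _ _ h1 h2 p hp q hq
    exact Relation.ReflTransGen.trans (h1 p hp _ (round_mem_lbox R y)) (h2 _ (round_mem_lbox R y) q hq)

theorem nbh_finite {R : ℝ} {K : Set (ℝ × ℝ)} (hK : IsCompact K) : (nbh R K).Finite := by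
  have hb : Bornology.IsBounded ((fun x : ℝ × ℝ => R • x) '' K) :=
    (hK.image (by fun_prop)).isBounded
  obtain ⟨C, hC⟩ := hb.exists_norm_le
  obtain ⟨n, hn⟩ := exists_nat_ge (C + 1)
  refine Set.Finite.subset (Set.finite_Icc ((-n, -n) : ℤ × ℤ) (n, n)) ?_
  rintro ⟨p1, p2⟩ ⟨x, hx, h1, h2⟩
  have h := hC _ (Set.mem_image_of_mem _ hx)
  rw [Prod.norm_def, max_le_iff] at h
  obtain ⟨h3, h4⟩ := h
  simp only [Prod.smul_fst, Prod.smul_snd, smul_eq_mul, Real.norm_eq_abs] at h3 h4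
  rw [abs_le] at h1 h2 h3 h4
  dsimp only at h1 h2
  have a1 : -(n : ℝ) ≤ p1 := by linarith [h1.1, h3.1]
  have a2 : (p1 : ℝ) ≤ n := by linarith [h1.2, h3.2]
  have a3 : -(n : ℝ) ≤ p2 := by linarith [h2.1, h4.1]
  have a4 : (p2 : ℝ) ≤ n := by linarith [h2.2, h4.2]
  exact ⟨⟨by exact_mod_cast a1, by exact_mod_cast a3⟩, ⟨by exact_mod_cast a2, by exact_mod_cast a4⟩⟩

theorem unif_dist {ι : Type} [Finite ι] (K : ι → Set (ℝ × ℝ)) (hK : ∀ i, IsCompact (K i)) :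
    ∃ R : ℝ, 0 < R ∧ ∀ i j, Disjoint (K i) (K j) → Disjoint (nbh R (K i)) (nbh R (K j)) := by
  have h : ∀ᶠ R : ℝ in Filter.atTop, ∀ i j, Disjoint (K i) (K j) →
      Disjoint (nbh R (K i)) (nbh R (K j)) := by
    rw [Filter.eventually_all]; intro i
    rw [Filter.eventually_all]; intro j
    by_cases hd : Disjoint (K i) (K j)
    · obtain ⟨r, hr, hr'⟩ := Metric.exists_pos_forall_lt_edist (hK i) (hK j).isClosed hd
      filter_upwards [Filter.eventually_ge_atTop (2 / (r : ℝ)), Filter.eventually_gt_atTop 0] with R hR hR0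
      intro _
      rw [Set.disjoint_left]
      rintro p ⟨x, hx, h1, h2⟩ ⟨y, hy, h3, h4⟩
      have hlt := hr' x hx y hy
      rw [edist_nndist, ENNReal.coe_lt_coe, ← NNReal.coe_lt_coe, coe_nndist] at hlt
      have hr0 : (0 : ℝ) < r := by exact_mod_cast hr
      have hR2 : 2 ≤ R * r := by rwa [div_le_iff₀ hr0] at hR
      have : R * Dist.dist x y ≤ 2 := by
        rw [Prod.dist_eq, Real.dist_eq, Real.dist_eq]
        rcases max_cases |x.1 - y.1| |x.2 - y.2| with ⟨h, _⟩ | ⟨h, _⟩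
        · rw [h, ← abs_of_pos hR0, ← abs_mul, mul_sub]
          rw [abs_le] at *
          constructor <;> linarith [h1.1, h1.2, h3.1, h3.2]
        · rw [h, ← abs_of_pos hR0, ← abs_mul, mul_sub]
          rw [abs_le] at *
          constructor <;> linarith [h2.1, h2.2, h4.1, h4.2]
      have := mul_lt_mul_of_pos_left hlt hR0
      linarith
    · exact Filter.Eventually.of_forall fun R h => absurd h hd
  obtain ⟨R, h1, h2⟩ := (h.and (Filter.eventually_gt_atTop 0)).exists
  exact ⟨R, h2, h1⟩

theorem draw_bound {X Y E : Type} [Fintype X] [Fintype Y] [Fintype E] (a : E → X) (b : E → Y)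
    (hab : ∀ e e', a e = a e' → b e = b e' → e = e')
    (f : X ⊕ Y → ℝ × ℝ) (γ : E → unitInterval → ℝ × ℝ) (hf : Function.Injective f)
    (hcont : ∀ e, Continuous (γ e)) (h0 : ∀ e, γ e 0 = f (Sum.inl (a e)))
    (h1 : ∀ e, γ e 1 = f (Sum.inr (b e))) (hinj : ∀ e, Function.Injective (γ e))
    (hint : ∀ e t, t ≠ 0 → t ≠ 1 → ∀ v, γ e t ≠ f v)
    (hcross : ∀ e e', e ≠ e' → ∀ s t, γ e s = γ e' t → γ e s ∈ Set.range f) :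
    Fintype.card E ≤ 2 * (Fintype.card X + Fintype.card Y) := by
  classical
  let t1 : unitInterval := ⟨1/3, by norm_num, by norm_num⟩
  let t2 : unitInterval := ⟨2/3, by norm_num, by norm_num⟩
  have ht12 : t1 < t2 := by change (1/3 : ℝ) < 2/3; norm_num
  have ht1 : (0 : unitInterval) < t1 := by change (0 : ℝ) < 1/3; norm_num
  have ht2 : t2 < (1 : unitInterval) := by change (2/3 : ℝ) < 1; norm_num
  -- ends
  have hv : ∀ e t v, γ e t = f v → (t = 0 ∧ v = Sum.inl (a e)) ∨ (t = 1 ∧ v = Sum.inr (b e)) := by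
    intro e t v h
    by_cases k0 : t = 0
    · subst k0; exact Or.inl ⟨rfl, hf (h.symm.trans (h0 e))⟩
    by_cases k1 : t = 1
    · subst k1; exact Or.inr ⟨rfl, hf (h.symm.trans (h1 e))⟩
    exact absurd h (hint e t k0 k1 v)
  have hx : ∀ e e' s t, γ e s = γ e' t → (e = e' ∧ s = t) ∨
      ∃ v, ((s = 0 ∧ v = Sum.inl (a e)) ∨ (s = 1 ∧ v = Sum.inr (b e))) ∧
        ((t = 0 ∧ v = Sum.inl (a e')) ∨ (t = 1 ∧ v = Sum.inr (b e'))) := by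
    intro e e' s t h
    by_cases he : e = e'
    · subst he; exact Or.inl ⟨rfl, hinj e h⟩
    · obtain ⟨v, hv'⟩ := hcross e e' he s t h
      exact Or.inr ⟨v, hv e s v hv'.symm, hv e' t v (h.symm.trans hv'.symm)⟩
  let KX : X → Set (ℝ × ℝ) := fun x => {f (Sum.inl x)} ∪ ⋃ e : {e // a e = x}, γ e '' Set.Iic t1
  let KY : Y → Set (ℝ × ℝ) := fun y => {f (Sum.inr y)} ∪ ⋃ e : {e // b e = y}, γ e '' Set.Ici t2
  let M : E → Set (ℝ × ℝ) := fun e => γ e '' Set.Icc t1 t2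
  let K : (X ⊕ Y) ⊕ E → Set (ℝ × ℝ) := Sum.elim (Sum.elim KX KY) M
  have memX : ∀ x z, z ∈ KX x → z = f (Sum.inl x) ∨ ∃ e t, a e = x ∧ t ≤ t1 ∧ γ e t = z := by
    rintro x z (h | h)
    · exact Or.inl h
    · obtain ⟨⟨e, he⟩, t, ht, rfl⟩ := Set.mem_iUnion.1 h
      exact Or.inr ⟨e, t, he, ht, rfl⟩
  have memY : ∀ y z, z ∈ KY y → z = f (Sum.inr y) ∨ ∃ e t, b e = y ∧ t2 ≤ t ∧ γ e t = z := by
    rintro x z (h | h)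
    · exact Or.inl h
    · obtain ⟨⟨e, he⟩, t, ht, rfl⟩ := Set.mem_iUnion.1 h
      exact Or.inr ⟨e, t, he, ht, rfl⟩
  have n1 : ∀ t : unitInterval, t ≤ t1 → t ≠ 1 := fun t h h' => by
    subst h'; exact absurd (h.trans_lt (ht12.trans ht2)) (lt_irrefl _)
  have n0 : ∀ t : unitInterval, t2 ≤ t → t ≠ 0 := fun t h h' => by
    subst h'; exact absurd ((ht1.trans ht12).trans_le h) (lt_irrefl _)
  have m1 : ∀ t : unitInterval, t ≤ t2 → t ≠ 1 := fun t h h' => by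
    subst h'; exact absurd (h.trans_lt ht2) (lt_irrefl _)
  have m0 : ∀ t : unitInterval, t1 ≤ t → t ≠ 0 := fun t h h' => by
    subst h'; exact absurd (ht1.trans_le h) (lt_irrefl _)
  have n12 : ∀ s t : unitInterval, s ≤ t1 → t2 ≤ t → s ≠ t := fun s t h h' h'' => by
    subst h''; exact absurd (ht12.trans_le (h'.trans h)) (lt_irrefl _)
  have hKc : ∀ i, IsCompact (K i) := by
    rintro ((x | y) | e)
    · exact isCompact_singleton.union (isCompact_iUnion fun e => isClosed_Iic.isCompact.image (hcont e))
    · exact isCompact_singleton.union (isCompact_iUnion fun e => isClosed_Ici.isCompact.image (hcont e))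
    · exact isClosed_Icc.isCompact.image (hcont e)
  have hKp : ∀ i, IsPreconnected (K i) := by
    rintro ((x | y) | e)
    · refine isPreconnected_of_forall (f (Sum.inl x)) fun z hz => ?_
      rcases hz with hz | hz
      · exact ⟨{f (Sum.inl x)}, Set.subset_union_left, rfl, hz, isPreconnected_singleton⟩
      · obtain ⟨e, he⟩ := Set.mem_iUnion.1 hz
        refine ⟨γ e '' Set.Iic t1, fun w hw => Or.inr (Set.mem_iUnion.2 ⟨e, hw⟩), ⟨0, ht1.le, ?_⟩, he,
          isPreconnected_Iic.image _ (hcont e).continuousOn⟩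
        rw [h0, e.2]
    · refine isPreconnected_of_forall (f (Sum.inr y)) fun z hz => ?_
      rcases hz with hz | hz
      · exact ⟨{f (Sum.inr y)}, Set.subset_union_left, rfl, hz, isPreconnected_singleton⟩
      · obtain ⟨e, he⟩ := Set.mem_iUnion.1 hz
        refine ⟨γ e '' Set.Ici t2, fun w hw => Or.inr (Set.mem_iUnion.2 ⟨e, hw⟩), ⟨1, ht2.le, ?_⟩, he,
          isPreconnected_Ici.image _ (hcont e).continuousOn⟩
        rw [h1, e.2]
    · exact isPreconnected_Icc.image _ (hcont e).continuousOn
  -- disjointness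
  have dXX : ∀ x x', x ≠ x' → Disjoint (KX x) (KX x') := by
    intro x x' hne
    rw [Set.disjoint_left]
    intro z hz hz'
    rcases memX _ _ hz with rfl | ⟨e, s, rfl, hs, rfl⟩
    · rcases memX _ _ hz' with h | ⟨e', t, rfl, ht, h⟩
      · exact hne (Sum.inl_injective (hf h))
      · have := n1 t ht; have := hv _ _ _ h; grind
    · rcases memX _ _ hz' with h | ⟨e', t, rfl, ht, h⟩
      · have := n1 s hs; have := hv _ _ _ h; grind
      · have := n1 s hs; have := n1 t ht; have := hx _ _ _ _ h; grind
  have dYY : ∀ x x', x ≠ x' → Disjoint (KY x) (KY x') := by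
    intro x x' hne
    rw [Set.disjoint_left]
    intro z hz hz'
    rcases memY _ _ hz with rfl | ⟨e, s, rfl, hs, rfl⟩
    · rcases memY _ _ hz' with h | ⟨e', t, rfl, ht, h⟩
      · exact hne (Sum.inr_injective (hf h))
      · have := n0 t ht; have := hv _ _ _ h; grind
    · rcases memY _ _ hz' with h | ⟨e', t, rfl, ht, h⟩
      · have := n0 s hs; have := hv _ _ _ h; grind
      · have := n0 s hs; have := n0 t ht; have := hx _ _ _ _ h; grind
  have dXY : ∀ x y, Disjoint (KX x) (KY y) := by
    intro x y
    rw [Set.disjoint_left]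
    intro z hz hz'
    rcases memX _ _ hz with rfl | ⟨e, s, rfl, hs, rfl⟩
    · rcases memY _ _ hz' with h | ⟨e', t, rfl, ht, h⟩
      · have := hf h; grind
      · have := n0 t ht; have := hv _ _ _ h; grind
    · rcases memY _ _ hz' with h | ⟨e', t, rfl, ht, h⟩
      · have := n1 s hs; have := hv _ _ _ h; grind
      · have := n1 s hs; have := n0 t ht; have := n12 s t hs ht; have := hx _ _ _ _ h; grind
  have dMM : ∀ e e', e ≠ e' → Disjoint (M e) (M e') := by
    intro e e' hne
    rw [Set.disjoint_left]
    rintro z ⟨s, hs, rfl⟩ ⟨t, ht, h⟩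
    have := m0 s hs.1; have := m1 s hs.2; have := hx _ _ _ _ h; grind
  have dMX : ∀ e x, a e ≠ x → Disjoint (M e) (KX x) := by
    intro e x hne
    rw [Set.disjoint_left]
    rintro z ⟨s, hs, rfl⟩ hz
    have := m0 s hs.1; have := m1 s hs.2
    rcases memX _ _ hz with h | ⟨e', t, rfl, ht, h⟩
    · have := hv _ _ _ h; grind
    · have := hx _ _ _ _ h; grind
  have dMY : ∀ e y, b e ≠ y → Disjoint (M e) (KY y) := by
    intro e x hne
    rw [Set.disjoint_left]
    rintro z ⟨s, hs, rfl⟩ hz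
    have := m0 s hs.1; have := m1 s hs.2
    rcases memY _ _ hz with h | ⟨e', t, rfl, ht, h⟩
    · have := hv _ _ _ h; grind
    · have := hx _ _ _ _ h; grind
  obtain ⟨R, hR, hdis⟩ := unif_dist K hKc
  have DXX : ∀ x x' p, p ∈ nbh R (KX x) → p ∈ nbh R (KX x') → x = x' := by
    intro x x' p hp hp'
    by_contra hne
    exact Set.disjoint_left.1 (hdis (Sum.inl (Sum.inl x)) (Sum.inl (Sum.inl x')) (dXX x x' hne)) hp hp'
  have DYY : ∀ x x' p, p ∈ nbh R (KY x) → p ∈ nbh R (KY x') → x = x' := by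
    intro x x' p hp hp'
    by_contra hne
    exact Set.disjoint_left.1 (hdis (Sum.inl (Sum.inr x)) (Sum.inl (Sum.inr x')) (dYY x x' hne)) hp hp'
  have DXY : ∀ x y p, p ∈ nbh R (KX x) → p ∉ nbh R (KY y) := fun x y p hp hp' =>
    Set.disjoint_left.1 (hdis (Sum.inl (Sum.inl x)) (Sum.inl (Sum.inr y)) (dXY x y)) hp hp'
  have DMM : ∀ e e' p, p ∈ nbh R (M e) → p ∈ nbh R (M e') → e = e' := by
    intro x x' p hp hp'
    by_contra hne
    exact Set.disjoint_left.1 (hdis (Sum.inr x) (Sum.inr x') (dMM x x' hne)) hp hp'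
  have DMX : ∀ e x p, p ∈ nbh R (M e) → p ∈ nbh R (KX x) → a e = x := by
    intro e x p hp hp'
    by_contra hne
    exact Set.disjoint_left.1 (hdis (Sum.inr e) (Sum.inl (Sum.inl x)) (dMX e x hne)) hp hp'
  have DMY : ∀ e x p, p ∈ nbh R (M e) → p ∈ nbh R (KY x) → b e = x := by
    intro e x p hp hp'
    by_contra hne
    exact Set.disjoint_left.1 (hdis (Sum.inr e) (Sum.inl (Sum.inr x)) (dMY e x hne)) hp hp'
  let Ex : E → Set (ℤ × ℤ) := fun e => {p | p ∈ nbh R (M e) \ nbh R (KY (b e)) ∧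
    ∃ p0 ∈ nbh R (KX (a e)), lconn (nbh R (M e) \ nbh R (KY (b e))) p0 p}
  let BX : X → Set (ℤ × ℤ) := fun x => nbh R (KX x) ∪ ⋃ e : {e // a e = x}, Ex e
  have memB : ∀ x p, p ∈ BX x → p ∈ nbh R (KX x) ∨ ∃ e, a e = x ∧ p ∈ Ex e := by
    rintro x p (h | h)
    · exact Or.inl h
    · obtain ⟨e, he⟩ := Set.mem_iUnion.1 h
      exact Or.inr ⟨e, e.2, he⟩
  have fX : ∀ x, (BX x).Finite := fun x =>
    (nbh_finite (hKc (Sum.inl (Sum.inl x)))).union (Set.finite_iUnion fun e =>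
      (nbh_finite (hKc (Sum.inr e.1))).subset fun p hp => hp.1.1)
  have fY : ∀ y, (nbh R (KY y)).Finite := fun y => nbh_finite (hKc (Sum.inl (Sum.inr y)))
  let B : X ⊕ Y → Finset (ℤ × ℤ) := Sum.elim (fun x => (fX x).toFinset) (fun y => (fY y).toFinset)
  have hBX : ∀ x, (B (Sum.inl x) : Set (ℤ × ℤ)) = BX x := fun x => (fX x).coe_toFinset
  have hBY : ∀ y, (B (Sum.inr y) : Set (ℤ × ℤ)) = nbh R (KY y) := fun y => (fY y).coe_toFinset
  have iBX : ∀ x p, p ∈ B (Sum.inl x) ↔ p ∈ BX x := fun x p => by rw [← hBX]; rfl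
  have iBY : ∀ y p, p ∈ B (Sum.inr y) ↔ p ∈ nbh R (KY y) := fun x p => by rw [← hBY]; rfl
  let rd : ℝ × ℝ → ℤ × ℤ := fun z => (round (R * z.1), round (R * z.2))
  have rootX : ∀ x, rd (f (Sum.inl x)) ∈ nbh R (KX x) := fun x =>
    ⟨_, Or.inl rfl, round_mem_lbox R _⟩
  have rootY : ∀ y, rd (f (Sum.inr y)) ∈ nbh R (KY y) := fun x =>
    ⟨_, Or.inl rfl, round_mem_lbox R _⟩
  have BXY : ∀ x y p, p ∈ BX x → p ∉ nbh R (KY y) := by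
    intro x y p hp hp'
    rcases memB _ _ hp with h | ⟨e, he, h⟩
    · exact DXY _ _ _ h hp'
    · have := DMY _ _ _ h.1.1 hp'
      subst this
      exact h.1.2 hp'
  refine model_bound a b hab B ?_ (fun v => rd (f v)) ?_ ?_
  · rintro (x | y) (x' | y') p hp hp'
    · rw [iBX] at hp hp'
      congr 1
      rcases memB _ _ hp with h | ⟨e, he, h⟩
      · rcases memB _ _ hp' with h' | ⟨e', he', h'⟩
        · exact DXX _ _ _ h h'
        · rw [← he']; exact (DMX _ _ _ h'.1.1 h).symm
      · rcases memB _ _ hp' with h' | ⟨e', he', h'⟩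
        · rw [← he]; exact DMX _ _ _ h.1.1 h'
        · rw [← he, ← he', DMM _ _ _ h.1.1 h'.1.1]
    · rw [iBX] at hp; rw [iBY] at hp'
      exact absurd hp' (BXY _ _ _ hp)
    · rw [iBY] at hp; rw [iBX] at hp'
      exact absurd hp (BXY _ _ _ hp')
    · rw [iBY] at hp hp'
      congr 1
      exact DYY _ _ _ hp hp'
  · rintro (x | y) p hp
    · rw [hBX]
      rw [iBX] at hp
      have base : ∀ p ∈ nbh R (KX x), lconn (BX x) (rd (f (Sum.inl x))) p := fun p hp =>
        lconn_mono Set.subset_union_left (nbh_conn hR (hKp (Sum.inl (Sum.inl x))) (rootX x) hp)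
      rcases memB _ _ hp with h | ⟨e, he, h⟩
      · exact base p h
      · subst he
        obtain ⟨hmem, p0, hp0, hc⟩ := h
        refine Relation.ReflTransGen.trans (base p0 hp0) ?_
        clear hp hmem
        induction hc with
        | refl => exact Relation.ReflTransGen.refl
        | @tail q r hq hr ih =>
          refine Relation.ReflTransGen.tail ih ⟨?_, ?_, hr.2.2⟩
          · exact Or.inr (Set.mem_iUnion.2 ⟨⟨e, rfl⟩, hr.1, p0, hp0, hq⟩)
          · exact Or.inr (Set.mem_iUnion.2 ⟨⟨e, rfl⟩, hr.2.1, p0, hp0, hq.tail hr⟩)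
    · rw [hBY]
      rw [iBY] at hp
      exact nbh_conn hR (hKp (Sum.inl (Sum.inr y))) (rootY y) hp
  · intro e
    have s1 : rd (γ e t1) ∈ nbh R (KX (a e)) :=
      ⟨γ e t1, Or.inr (Set.mem_iUnion.2 ⟨⟨e, rfl⟩, t1, Set.mem_Iic.2 (le_refl t1), rfl⟩), round_mem_lbox R _⟩
    have s2 : rd (γ e t1) ∈ nbh R (M e) := ⟨γ e t1, ⟨t1, ⟨le_rfl, ht12.le⟩, rfl⟩, round_mem_lbox R _⟩
    have s3 : rd (γ e t2) ∈ nbh R (KY (b e)) :=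
      ⟨γ e t2, Or.inr (Set.mem_iUnion.2 ⟨⟨e, rfl⟩, t2, Set.mem_Ici.2 (le_refl t2), rfl⟩), round_mem_lbox R _⟩
    have s4 : rd (γ e t2) ∈ nbh R (M e) := ⟨γ e t2, ⟨t2, ⟨ht12.le, le_rfl⟩, rfl⟩, round_mem_lbox R _⟩
    obtain ⟨p', q', g1, g2, g3, g4, g5, g6⟩ := lconn_first
      (nbh_conn hR (hKp (Sum.inr e)) s2 s4) (DXY _ _ _ s1) s3
    exact ⟨p', (iBX _ _).2 (Or.inr (Set.mem_iUnion.2 ⟨⟨e, rfl⟩, ⟨g5, g3⟩, _, s1, g1⟩)), q',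
      (iBY _ _).2 g4, g2⟩

end topo

theorem planar_bound (H : SimpleGraph V28) (hH : IsPlanar H) :
    Nat.card {xy : Fin 13 × Fin 13 // H.Adj ⟨1, xy.1⟩ ⟨2, xy.2⟩} ≤ 52 := by
  classical
  obtain ⟨f, γ, hf, hcont, hend, hinj, hint, hcross⟩ := hH
  let E := {xy : Fin 13 × Fin 13 // H.Adj ⟨1, xy.1⟩ ⟨2, xy.2⟩}
  let vx : Fin 13 → V28 := fun x => ⟨1, x⟩
  let vy : Fin 13 → V28 := fun y => ⟨2, y⟩
  have hvx : Function.Injective vx := fun x x' h => by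
    have := congrArg enc28 h
    exact Fin.ext (Nat.add_left_cancel (n := 2) this)
  have hvy : Function.Injective vy := fun x x' h => by
    have := congrArg enc28 h
    exact Fin.ext (Nat.add_left_cancel (n := 15) this)
  have hvxy : ∀ x y, vx x ≠ vy y := fun x y h => by
    have h2 : (1 : Fin 3) = 2 := congrArg Sigma.fst h
    exact absurd h2 (by decide)
  let ed : E → H.edgeSet := fun e => ⟨s(vx e.1.1, vy e.1.2), e.2⟩
  have hed : Function.Injective ed := by
    intro e e' h
    have h : s(vx e.1.1, vy e.1.2) = s(vx e'.1.1, vy e'.1.2) := congrArg Subtype.val h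
    rw [Sym2.eq_iff] at h
    rcases h with ⟨h1, h2⟩ | ⟨h1, h2⟩
    · exact Subtype.ext (Prod.ext (hvx h1) (hvy h2))
    · exact absurd h1 (hvxy _ _)
  have hor : ∀ e : E, ∃ g : unitInterval → ℝ × ℝ, Continuous g ∧ Function.Injective g ∧
      g 0 = f (vx e.1.1) ∧ g 1 = f (vy e.1.2) ∧ (∀ t, t ≠ 0 → t ≠ 1 → ∀ v, g t ≠ f v) ∧
      ∀ t, ∃ s, g t = γ (ed e) s := by
    intro e
    have hi : ∀ t : unitInterval, t ≠ 0 → t ≠ 1 → ∀ v, γ (ed e) t ≠ f v := by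
      intro t k0 k1
      exact hint (ed e) t (fun h => k0 (Subtype.ext h)) (fun h => k1 (Subtype.ext h))
    obtain ⟨u, v, huv, h0, h1⟩ := hend (ed e)
    have huv : s(vx e.1.1, vy e.1.2) = s(u, v) := huv
    rw [Sym2.eq_iff] at huv
    rcases huv with ⟨rfl, rfl⟩ | ⟨rfl, rfl⟩
    · exact ⟨γ (ed e), hcont _, hinj _, h0, h1, hi, fun t => ⟨t, rfl⟩⟩
    · refine ⟨fun t => γ (ed e) (unitInterval.symm t), (hcont _).comp unitInterval.continuous_symm,
        (hinj _).comp unitInterval.symm_bijective.injective, ?_, ?_, ?_, fun t => ⟨_, rfl⟩⟩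
      · exact (congrArg (γ (ed e)) unitInterval.symm_zero).trans h1
      · exact (congrArg (γ (ed e)) unitInterval.symm_one).trans h0
      · intro t k0 k1 v
        exact hi _ (fun h => k1 (unitInterval.symm_bijective.injective (h.trans unitInterval.symm_one.symm)))
          (fun h => k0 (unitInterval.symm_bijective.injective (h.trans unitInterval.symm_zero.symm))) v
  choose g g1 g2 g3 g4 g5 g6 using hor
  have key := draw_bound (X := Fin 13) (Y := Fin 13) (E := E) (fun e => e.1.1) (fun e => e.1.2)
    (fun e e' h h' => Subtype.ext (Prod.ext h h')) (fun v => f (Sum.elim vx vy v)) g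
    (hf.comp (Function.Injective.sumElim hvx hvy hvxy)) g1 g3 g4 g2
    (fun e t k0 k1 v => g5 e t k0 k1 _) ?_
  · rw [Nat.card_eq_fintype_card]
    simpa using key
  · intro e e' hne s t h
    obtain ⟨s', hs'⟩ := g6 e s
    obtain ⟨t', ht'⟩ := g6 e' t
    have hr := hcross (ed e) (ed e') (fun h => hne (hed h)) s' t' (by rw [← hs', ← ht', h])
    rw [← hs'] at hr
    obtain ⟨v, hv⟩ := hr
    have k : s = 0 ∨ s = 1 := by
      by_contra hcon
      push Not at hcon
      exact g5 e s hcon.1 hcon.2 v hv.symm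
    rcases k with rfl | rfl
    · exact ⟨Sum.inl e.1.1, (g3 e).symm⟩
    · exact ⟨Sum.inr e.1.2, (g4 e).symm⟩

theorem lower28 (n : ℕ) (H : Fin n → SimpleGraph V28) (hp : ∀ i, IsPlanar (H i))
    (hs : (⨆ i, H i) = completeMultipartiteGraph ![Fin 2, Fin 13, Fin 13]) : 4 ≤ n := by
  classical
  have hc : ∀ xy : Fin 13 × Fin 13, ∃ i, (H i).Adj ⟨1, xy.1⟩ ⟨2, xy.2⟩ := by
    intro xy
    rw [← SimpleGraph.iSup_adj, hs]
    change (1 : Fin 3) ≠ 2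
    decide
  choose i hi using hc
  have hcard : Fintype.card (Fin 13 × Fin 13) ≤
      Fintype.card (Σ j : Fin n, {xy : Fin 13 × Fin 13 // (H j).Adj ⟨1, xy.1⟩ ⟨2, xy.2⟩}) := by
    refine Fintype.card_le_of_injective (fun xy => ⟨i xy, xy, hi xy⟩) ?_
    intro u v h
    have h2 := congrArg (fun z : (Σ j : Fin n, {xy : Fin 13 × Fin 13 // (H j).Adj ⟨1, xy.1⟩ ⟨2, xy.2⟩}) => z.2.1) h
    exact h2
  rw [Fintype.card_sigma] at hcard
  have : ∑ j : Fin n, Fintype.card {xy : Fin 13 × Fin 13 // (H j).Adj ⟨1, xy.1⟩ ⟨2, xy.2⟩}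
      ≤ ∑ j : Fin n, 52 := by
    refine Finset.sum_le_sum fun j _ => ?_
    rw [← Nat.card_eq_fintype_card]
    exact planar_bound (H j) (hp j)
  simp at this hcard
  omega

theorem thickness_K2_13_13 :
    thickness (completeMultipartiteGraph ![Fin 2, Fin 13, Fin 13]) = 4 := by
  apply le_antisymm
  · exact Nat.sInf_le upper28
  · refine le_csInf ⟨4, upper28⟩ ?_
    rintro n ⟨H, _, hp, hs⟩
    exact lower28 n H hp hs
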